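/- For every real-valued martingale (X_n)_{n≥1} (with X_0 = 0) such that E[X_n^2] < ∞, and every n ≥ 1, one has (1/4)·E[(X_n*)^2] ≤ E[S_n(X)^2] ≤ E[(X_n*)^2]. -/

import Mathlib

open MeasureTheory Finset

/-!
Two facts carry the proof. First, a martingale increment `X (k+1) - X k` is orthogonal in `L²` to
every square integrable function known at time `k` (`integral_mul_increment_eq_zero`). Taking that
function to be `X k` and expanding squares gives `E[S_n²] = E[X_n²]`
(`integral_sum_sq_increment`), and the right-hand inequality follows from `|X_n| ≤ X_n*`.

Second, the left-hand inequality is Doob's `L²` inequality `E[(X_n*)²] ≤ 4 E[X_n²]`, which is obtained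
here from the pathwise inequality
`(X_n*)² ≤ 4 X_n² - 4 ∑_{k<n} sign(X_k) X_k* (X_{k+1} - X_k)` (`runMax_sq_le`): by orthogonality,
the sum on the right has mean zero.
-/

/-- The running maximum `max_{1 ≤ j ≤ k} |x j|` of a real sequence, with value `0` at `k = 0`. -/
noncomputable def runMax (x : ℕ → ℝ) : ℕ → ℝ
  | 0 => 0
  | k + 1 => max (runMax x k) |x (k + 1)|

lemma runMax_nonneg (x : ℕ → ℝ) (k : ℕ) : 0 ≤ runMax x k := by
  induction k with
  | zero => exact le_rfl
  | succ k ih => exact ih.trans (le_max_left _ _)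

lemma abs_le_runMax (x : ℕ → ℝ) {j n : ℕ} (hj : 1 ≤ j) (hjn : j ≤ n) : |x j| ≤ runMax x n := by
  induction n with
  | zero => omega
  | succ n ih =>
    rcases Nat.lt_or_ge n j with h | h
    · obtain rfl : j = n + 1 := by omega
      exact le_max_right _ _
    · exact (ih h).trans (le_max_left _ _)

/-- The inner supremum is over a proposition, so indices outside `Icc 1 n` contribute
`sSup ∅ = 0`; this is harmless because the absolute values are nonnegative. -/
lemma iSup_eq_runMax (x : ℕ → ℝ) (n : ℕ) : (⨆ j ∈ Finset.Icc 1 n, |x j|) = runMax x n := by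
  have hle : ∀ j, (⨆ _ : j ∈ Finset.Icc 1 n, |x j|) ≤ runMax x n := fun j =>
    Real.iSup_le (fun h => abs_le_runMax x (Finset.mem_Icc.1 h).1 (Finset.mem_Icc.1 h).2)
      (runMax_nonneg x n)
  have hbdd : BddAbove (Set.range fun j => ⨆ _ : j ∈ Finset.Icc 1 n, |x j|) :=
    ⟨runMax x n, by rintro _ ⟨j, rfl⟩; exact hle j⟩
  refine le_antisymm (Real.iSup_le hle (runMax_nonneg x n)) ?_
  have key : ∀ k, k ≤ n → runMax x k ≤ ⨆ j ∈ Finset.Icc 1 n, |x j| := by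
    intro k
    induction k with
    | zero =>
      intro _
      exact Real.iSup_nonneg fun j => Real.iSup_nonneg fun _ => abs_nonneg _
    | succ k ih =>
      intro hk
      refine max_le (ih (by omega)) (le_ciSup_of_le hbdd (k + 1) ?_)
      have hmem : k + 1 ∈ Finset.Icc 1 n := Finset.mem_Icc.2 ⟨by omega, hk⟩
      rw [ciSup_pos hmem]
  exact key n le_rfl

/-- The pathwise form of Doob's `L²` inequality. With `M = runMax x` and `y = |x|`, summation by
parts gives `∑ M_k (y_{k+1} - y_k) = M_n y_n - ∑ y_{k+1} (M_{k+1} - M_k)`. Since `M` increases only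
when `M_{k+1} = y_{k+1}`, the last sum is at least `M_n² / 2`. The claim
follows from `M_n y_n ≤ M_n² / 4 + y_n²` and `sign (x_k) (x_{k+1} - x_k) ≤ y_{k+1} - y_k`. -/
lemma runMax_sq_le (x : ℕ → ℝ) (n : ℕ) :
    runMax x n ^ 2 ≤ 4 * x n ^ 2 -
      4 * ∑ k ∈ Finset.range n, Real.sign (x k) * runMax x k * (x (k + 1) - x k) := by
  have key : runMax x n ^ 2 / 2 +
      ∑ k ∈ Finset.range n, Real.sign (x k) * runMax x k * (x (k + 1) - x k) ≤
        runMax x n * |x n| := by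
    induction n with
    | zero => simp [runMax]
    | succ k ih =>
      rw [Finset.sum_range_succ]
      have hM := runMax_nonneg x k
      have hsign : Real.sign (x k) * (x (k + 1) - x k) ≤ |x (k + 1)| - |x k| := by
        rcases lt_trichotomy (x k) 0 with h | h | h
        · rw [Real.sign_of_neg h, abs_of_neg h]
          linarith [neg_le_abs (x (k + 1))]
        · simp [h]
        · rw [Real.sign_of_pos h, abs_of_pos h]
          linarith [le_abs_self (x (k + 1))]
      have hstep := mul_le_mul_of_nonneg_left hsign hM
      rcases le_total (|x (k + 1)|) (runMax x k) with h | h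
      · rw [runMax, max_eq_left h]
        linarith
      · rw [runMax, max_eq_right h]
        nlinarith [sq_nonneg (|x (k + 1)| - runMax x k)]
  nlinarith [sq_nonneg (runMax x n / 2 - |x n|), sq_abs (x n)]

section Martingale

variable {Ω : Type*} {m0 : MeasurableSpace Ω} {μ : Measure Ω}
  {ℱ : Filtration ℕ m0} {X : ℕ → Ω → ℝ}

/-- Square integrability at time `n` passes to earlier times, as conditional expectation
contracts `L²`. -/
lemma memLp_of_le (hX : Martingale X ℱ μ) {n k : ℕ} (hkn : k ≤ n) (hn : MemLp (X n) 2 μ) :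
    MemLp (X k) 2 μ :=
  (memLp_congr_ae (hX.condExp_ae_eq hkn)).1 (hn.condExp (by norm_num))

lemma integral_mul_increment_eq_zero [IsProbabilityMeasure μ] (hX : Martingale X ℱ μ) {k : ℕ}
    {g : Ω → ℝ} (hg : StronglyMeasurable[ℱ k] g) (hg2 : MemLp g 2 μ) (hk : MemLp (X k) 2 μ)
    (hk1 : MemLp (X (k + 1)) 2 μ) : ∫ ω, g ω * (X (k + 1) ω - X k ω) ∂μ = 0 := by
  have h1 : Integrable (g * X (k + 1)) μ := hg2.integrable_mul hk1
  have h2 : Integrable (g * X k) μ := hg2.integrable_mul hk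
  have hpull : μ[g * X (k + 1) | ℱ k] =ᵐ[μ] g * X k :=
    (condExp_mul_of_stronglyMeasurable_left hg h1 (hX.integrable _)).trans
      ((hX.condExp_ae_eq k.le_succ).mono fun ω h => by simp [h])
  have heq : ∫ ω, (g * X (k + 1)) ω ∂μ = ∫ ω, (g * X k) ω ∂μ := by
    rw [← integral_condExp (ℱ.le k), integral_congr_ae hpull]
  have hsub := integral_sub h1 h2
  rw [heq, sub_self] at hsub
  rw [← hsub]
  exact integral_congr_ae (Filter.Eventually.of_forall fun ω => by simp [mul_sub])

lemma stronglyMeasurable_runMax (hX : Martingale X ℱ μ) (k : ℕ) :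
    StronglyMeasurable[ℱ k] fun ω => runMax (fun j => X j ω) k := by
  induction k with
  | zero => exact stronglyMeasurable_const
  | succ k ih =>
    have h1 : StronglyMeasurable[ℱ (k + 1)] fun ω => runMax (fun j => X j ω) k :=
      ih.mono (ℱ.mono k.le_succ)
    have h2 : StronglyMeasurable[ℱ (k + 1)] fun ω => |X (k + 1) ω| :=
      continuous_abs.comp_stronglyMeasurable (hX.stronglyMeasurable (k + 1))
    exact (h1.measurable.max h2.measurable).stronglyMeasurable

lemma memLp_runMax (hX : Martingale X ℱ μ) {n k : ℕ} (hkn : k ≤ n) (hn : MemLp (X n) 2 μ) :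
    MemLp (fun ω => runMax (fun j => X j ω) k) 2 μ := by
  induction k with
  | zero => exact MemLp.zero
  | succ k ih => exact (ih (by omega)).sup (memLp_of_le hX hkn hn).abs

/-- Orthogonality of increments: `E[S_n²] = E[X_n²]`. -/
lemma integral_sum_sq_increment [IsProbabilityMeasure μ] (hX : Martingale X ℱ μ) (hX0 : X 0 = 0)
    {n : ℕ} (hn : MemLp (X n) 2 μ) :
    ∫ ω, ∑ k ∈ Finset.range n, (X (k + 1) ω - X k ω) ^ 2 ∂μ = ∫ ω, X n ω ^ 2 ∂μ := by
  have hL : ∀ {k}, k ≤ n → MemLp (X k) 2 μ := fun h => memLp_of_le hX h hn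
  rw [integral_finsetSum]
  · have hstep : ∀ k ∈ Finset.range n, ∫ ω, (X (k + 1) ω - X k ω) ^ 2 ∂μ =
        ∫ ω, X (k + 1) ω ^ 2 ∂μ - ∫ ω, X k ω ^ 2 ∂μ := by
      intro k hk
      have hk' := Finset.mem_range.1 hk
      have h0 : MemLp (X k) 2 μ := hL hk'.le
      have h1 : MemLp (X (k + 1)) 2 μ := hL hk'
      have horth := integral_mul_increment_eq_zero hX (hX.stronglyMeasurable k) h0 h0 h1
      have hcross : Integrable (fun ω => X k ω * (X (k + 1) ω - X k ω)) μ :=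
        h0.integrable_mul (h1.sub h0)
      have hexp : ∀ ω, (X (k + 1) ω - X k ω) ^ 2 =
          (X (k + 1) ω ^ 2 - X k ω ^ 2) - 2 * (X k ω * (X (k + 1) ω - X k ω)) :=
        fun ω => by ring
      simp_rw [hexp]
      have hdiff : Integrable (fun ω => X (k + 1) ω ^ 2 - X k ω ^ 2) μ :=
        h1.integrable_sq.sub h0.integrable_sq
      rw [integral_sub hdiff (hcross.const_mul 2),
        integral_sub h1.integrable_sq h0.integrable_sq, integral_const_mul, horth]
      ring
    rw [Finset.sum_congr rfl hstep, Finset.sum_range_sub (fun k => ∫ ω, X k ω ^ 2 ∂μ)]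
    simp [hX0]
  · intro k hk
    have hk' := Finset.mem_range.1 hk
    exact ((hL hk').sub (hL hk'.le)).integrable_sq

/-- Doob's `L²` maximal inequality. -/
lemma integral_runMax_sq_le [IsProbabilityMeasure μ] (hX : Martingale X ℱ μ) {n : ℕ}
    (hn : MemLp (X n) 2 μ) :
    ∫ ω, runMax (fun j => X j ω) n ^ 2 ∂μ ≤ 4 * ∫ ω, X n ω ^ 2 ∂μ := by
  set g : ℕ → Ω → ℝ := fun k ω => Real.sign (X k ω) * runMax (fun j => X j ω) k with hg
  have hgm : ∀ k, StronglyMeasurable[ℱ k] (g k) := fun k => by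
    have hs : Measurable Real.sign :=
      Measurable.ite measurableSet_Iio measurable_const
        (Measurable.ite measurableSet_Ioi measurable_const measurable_const)
    exact ((hs.comp (hX.stronglyMeasurable k).measurable).stronglyMeasurable).mul
      (stronglyMeasurable_runMax hX k)
  have hg2 : ∀ {k}, k ≤ n → MemLp (g k) 2 μ := fun {k} hk => by
    refine (memLp_runMax hX hk hn).mono ((hgm k).mono (ℱ.le k)).aestronglyMeasurable
      (Filter.Eventually.of_forall fun ω => ?_)
    rw [hg, norm_mul]
    refine mul_le_of_le_one_left (norm_nonneg _) ?_
    rcases Real.sign_apply_eq (X k ω) with h | h | h <;> simp [h]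
  have hint : ∀ k ∈ Finset.range n, Integrable (fun ω => g k ω * (X (k + 1) ω - X k ω)) μ := by
    intro k hk
    have hk' := Finset.mem_range.1 hk
    exact (hg2 hk'.le).integrable_mul ((memLp_of_le hX hk' hn).sub (memLp_of_le hX hk'.le hn))
  have hzero : ∫ ω, ∑ k ∈ Finset.range n, g k ω * (X (k + 1) ω - X k ω) ∂μ = 0 := by
    rw [integral_finsetSum _ hint]
    refine Finset.sum_eq_zero fun k hk => ?_
    have hk' := Finset.mem_range.1 hk
    exact integral_mul_increment_eq_zero hX (hgm k) (hg2 hk'.le) (memLp_of_le hX hk'.le hn)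
      (memLp_of_le hX hk' hn)
  have hsq : Integrable (fun ω => 4 * X n ω ^ 2) μ := hn.integrable_sq.const_mul 4
  have hsum := (integrable_finsetSum _ hint).const_mul 4
  calc ∫ ω, runMax (fun j => X j ω) n ^ 2 ∂μ
      ≤ ∫ ω, (4 * X n ω ^ 2 -
          4 * ∑ k ∈ Finset.range n, g k ω * (X (k + 1) ω - X k ω)) ∂μ :=
        integral_mono (memLp_runMax hX le_rfl hn).integrable_sq (hsq.sub hsum)
          fun ω => runMax_sq_le (fun j => X j ω) n
    _ = 4 * ∫ ω, X n ω ^ 2 ∂μ := by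
        rw [integral_sub hsq hsum, integral_const_mul, integral_const_mul, hzero]
        ring

end Martingale

/-- For every real-valued martingale `(X_n)` with `X_0 = 0` such that `E[X_n^2] < ∞`,
and every `n ≥ 1`, one has `(1/4)·E[(X_n*)^2] ≤ E[S_n(X)^2] ≤ E[(X_n*)^2]`. -/
theorem burkholder_p_two
    {Ω : Type*} {m0 : MeasurableSpace Ω} {μ : Measure Ω} [IsProbabilityMeasure μ]
    (ℱ : Filtration ℕ m0) (X : ℕ → Ω → ℝ) (hX : Martingale X ℱ μ) (hX0 : X 0 = 0)
    (n : ℕ) (hn : 1 ≤ n) (hint : Integrable (fun ω => X n ω ^ 2) μ) :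
    (1 / 4) * ∫ ω, (⨆ j ∈ Finset.Icc 1 n, |X j ω|) ^ 2 ∂μ ≤
      ∫ ω, ((∑ j ∈ Finset.Icc 1 n, (X j ω - X (j - 1) ω) ^ 2) ^ (1 / 2 : ℝ)) ^ 2 ∂μ ∧
    ∫ ω, ((∑ j ∈ Finset.Icc 1 n, (X j ω - X (j - 1) ω) ^ 2) ^ (1 / 2 : ℝ)) ^ 2 ∂μ ≤
      ∫ ω, (⨆ j ∈ Finset.Icc 1 n, |X j ω|) ^ 2 ∂μ := by
  have hL : MemLp (X n) 2 μ :=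
    (memLp_two_iff_integrable_sq (hX.integrable n).aestronglyMeasurable).2 hint
  have hmax : ∀ ω, (⨆ j ∈ Finset.Icc 1 n, |X j ω|) = runMax (fun j => X j ω) n :=
    fun ω => iSup_eq_runMax (fun j => X j ω) n
  have hsq : ∀ ω, ((∑ j ∈ Finset.Icc 1 n, (X j ω - X (j - 1) ω) ^ 2) ^ (1 / 2 : ℝ)) ^ 2 =
      ∑ k ∈ Finset.range n, (X (k + 1) ω - X k ω) ^ 2 := by
    intro ω
    rw [← Real.sqrt_eq_rpow, Real.sq_sqrt (Finset.sum_nonneg fun _ _ => sq_nonneg _),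
      Finset.range_eq_Ico]
    exact (Finset.sum_Ico_add' (fun j => (X j ω - X (j - 1) ω) ^ 2) 0 n 1).symm
  simp_rw [hmax, hsq]
  rw [integral_sum_sq_increment hX hX0 hL]
  refine ⟨by linarith [integral_runMax_sq_le hX hL], ?_⟩
  refine integral_mono hint (memLp_runMax hX le_rfl hL).integrable_sq fun ω => ?_
  exact sq_le_sq' (by linarith [neg_abs_le (X n ω), abs_le_runMax (fun j => X j ω) hn le_rfl])
    ((le_abs_self _).trans (abs_le_runMax (fun j => X j ω) hn le_rfl))
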